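/- arXiv:2101.01845 — 8 statements merged into one kernel-verified Lean document; each statement's English description precedes it below -/
import Mathlib

section
/- Let X be a separable metrizable topological space, let f ⊆ X × X be a relation satisfying condition Γ, and let P be a partially ordered set. Then the Mahavier product M(X,f,P) is separable and metrizable if and only if P is countable. -/
/-- The Mahavier product `M(X,f,Q)`: functions `x : Q → X` with `x p ∈ f (x q)`
(i.e. `(x q, x p) ∈ f`) whenever `p ≼ q`, as a subspace of `X^Q`. -/
def mahavier {X : Type*} (f : Set (X × X)) (Q : Type*) [Preorder Q] : Set (Q → X) :=
  {x | ∀ p q : Q, p ≤ q → (x q, x p) ∈ f}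

/-- Condition Γ: there exist distinct `x, y` with `(x,x), (x,y), (y,y) ∈ f`. -/
def conditionGamma {X : Type*} (f : Set (X × X)) : Prop :=
  ∃ x y : X, x ≠ y ∧ (x, x) ∈ f ∧ (x, y) ∈ f ∧ (y, y) ∈ f

/-- For separable metrizable `X`, a relation `f` satisfying condition Γ, and a partial
order `P`, the Mahavier product `M(X,f,P)` is separable and metrizable iff `P` is
countable. -/
theorem mahavier_separable_metrizable_iff_countable
    {X : Type*} [TopologicalSpace X] [TopologicalSpace.SeparableSpace X]
    [TopologicalSpace.MetrizableSpace X]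
    {f : Set (X × X)} (hf : conditionGamma f)
    (P : Type*) [PartialOrder P] :
    (TopologicalSpace.SeparableSpace (mahavier f P) ∧
      TopologicalSpace.MetrizableSpace (mahavier f P)) ↔ Countable P := by
  classical
  have hX : SecondCountableTopology X := by
    let := TopologicalSpace.metrizableSpaceMetric X
    exact UniformSpace.secondCountable_of_separable X
  constructor
  · rintro ⟨h1, h2⟩
    have hM : SecondCountableTopology (mahavier f P) := by
      let := TopologicalSpace.metrizableSpaceMetric (mahavier f P)
      exact UniformSpace.secondCountable_of_separable (mahavier f P)
    obtain ⟨x, y, hxy, hxx, hxy', hyy⟩ := hf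
    let u : P → mahavier f P := fun p => ⟨fun q => if q ≤ p then y else x, by
      intro a b hab
      by_cases hb : b ≤ p
      · have ha : a ≤ p := hab.trans hb
        simpa [ha, hb] using hyy
      · by_cases ha : a ≤ p
        · simpa [ha, hb] using hxy'
        · simpa [ha, hb] using hxx⟩
    let W : P → Set (mahavier f P) := fun p => {z | z.1 p ≠ x}
    have hW : ∀ p, IsOpen (W p) := fun p =>
      isOpen_ne.preimage ((continuous_apply p).comp continuous_subtype_val)
    have huW : ∀ p q, u p ∈ W q ↔ q ≤ p := by
      intro p q
      by_cases h : q ≤ p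
      · simp [u, W, h, hxy.symm]
      · simp [u, W, h]
    have hB := TopologicalSpace.isBasis_countableBasis (mahavier f P)
    choose B hBm huB hBW using fun p =>
      hB.exists_subset_of_mem_open ((huW p p).2 le_rfl) (hW p)
    have hc : Countable (TopologicalSpace.countableBasis (mahavier f P)) :=
      (TopologicalSpace.countable_countableBasis _).to_subtype
    refine Function.Injective.countable
      (f := fun p => (⟨B p, hBm p⟩ : TopologicalSpace.countableBasis (mahavier f P))) ?_
    intro p q hpq
    have e : B p = B q := congrArg Subtype.val hpq
    apply le_antisymm
    · exact (huW q p).1 (hBW p (e ▸ huB q))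
    · exact (huW p q).1 (hBW q (e ▸ huB p))
  · intro hP
    let := TopologicalSpace.metrizableSpaceMetric X
    exact ⟨inferInstance, inferInstance⟩
end

section
/- Let P be a partially ordered set and let Ď(P) be the set of downward subsets of P, equipped with the POTS topology of the partial order ⊆ on Ď(P). Then Ď(P) is second-countable if and only if P is countable. -/
/-- The POTS topology on a preordered set `S`: generated by the subbasis
`{{r | ¬ r ≤ s} : s ∈ S} ∪ {{r | ¬ s ≤ r} : s ∈ S}`. -/
def potsTopology (S : Type*) [Preorder S] : TopologicalSpace S :=
  TopologicalSpace.generateFrom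
    ({U | ∃ s : S, U = {r : S | ¬ r ≤ s}} ∪ {U | ∃ s : S, U = {r : S | ¬ s ≤ r}})

/-- `Ď(P)`: the set of downward (lower) subsets of `P`. -/
def DCheck (P : Type*) [Preorder P] : Type _ := {A : Set P // IsLowerSet A}

/-- `Ď(P)` is partially ordered by inclusion. -/
instance {P : Type*} [Preorder P] : PartialOrder (DCheck P) :=
  Subtype.partialOrder _

/-- `Ď(P)` carries the POTS topology of `⊆`. -/
instance {P : Type*} [Preorder P] : TopologicalSpace (DCheck P) :=
  potsTopology (DCheck P)

theorem dCheck_isOpen_mem {P : Type*} [PartialOrder P] (p : P) :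
    IsOpen {A : DCheck P | p ∈ A.1} := by
  apply TopologicalSpace.isOpen_generateFrom_of_mem
  left
  refine ⟨⟨(Set.Ici p)ᶜ, (isUpperSet_Ici p).compl⟩, ?_⟩
  ext r
  constructor
  · intro hr hle
    exact hle hr (le_refl p)
  · intro hr
    by_contra hp
    exact hr fun x hx hpx => hp (r.2 hpx hx)

theorem dCheck_isOpen_not_mem {P : Type*} [PartialOrder P] (p : P) :
    IsOpen {A : DCheck P | p ∉ A.1} := by
  apply TopologicalSpace.isOpen_generateFrom_of_mem
  right
  refine ⟨⟨Set.Iic p, isLowerSet_Iic p⟩, ?_⟩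
  ext r
  constructor
  · intro hr hle
    exact hr (hle (le_refl p))
  · intro hr hp
    exact hr fun x hx => r.2 hx hp

/-- `Ď(P)` with its POTS topology is second-countable iff `P` is countable. -/
theorem dCheck_secondCountable_iff_countable (P : Type*) [PartialOrder P] :
    SecondCountableTopology (DCheck P) ↔ Countable P := by
  constructor
  · intro h
    have key : ∀ p : P, ∃ B ∈ TopologicalSpace.countableBasis (DCheck P),
        (⟨Set.Iic p, isLowerSet_Iic p⟩ : DCheck P) ∈ B ∧ B ⊆ {A : DCheck P | p ∈ A.1} := by
      intro p
      exact (TopologicalSpace.isBasis_countableBasis (DCheck P)).exists_subset_of_mem_open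
        (show (⟨Set.Iic p, isLowerSet_Iic p⟩ : DCheck P) ∈ {A : DCheck P | p ∈ A.1} from
          le_refl p) (dCheck_isOpen_mem p)
    choose B hB hmem hsub using key
    have : Countable (TopologicalSpace.countableBasis (DCheck P)) :=
      (TopologicalSpace.countable_countableBasis (DCheck P)).to_subtype
    refine Function.Injective.countable
      (f := fun p => (⟨B p, hB p⟩ : TopologicalSpace.countableBasis (DCheck P))) ?_
    intro p q hpq
    have e : B p = B q := congrArg Subtype.val hpq
    have h1 : p ≤ q := hsub p (e ▸ hmem q)
    have h2 : q ≤ p := hsub q (e ▸ hmem p)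
    exact le_antisymm h1 h2
  · intro h
    refine ⟨⟨Set.range (fun p : P => {A : DCheck P | p ∈ A.1}) ∪
      Set.range (fun p : P => {A : DCheck P | p ∉ A.1}),
      (Set.countable_range _).union (Set.countable_range _), ?_⟩⟩
    apply le_antisymm
    · apply le_generateFrom
      rintro U (⟨p, rfl⟩ | ⟨p, rfl⟩)
      · exact dCheck_isOpen_mem p
      · exact dCheck_isOpen_not_mem p
    · apply le_generateFrom
      rintro U (⟨s, rfl⟩ | ⟨s, rfl⟩)
      · have : {r : DCheck P | ¬ r ≤ s} = ⋃ p ∈ s.1ᶜ, {A : DCheck P | p ∈ A.1} := by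
          ext r
          simp only [Set.mem_iUnion, Set.mem_setOf_eq]
          constructor
          · intro hr
            obtain ⟨x, hx, hxs⟩ := Set.not_subset.1 hr
            exact ⟨x, hxs, hx⟩
          · rintro ⟨x, hxs, hx⟩ hle
            exact hxs (hle hx)
        rw [this]
        exact @isOpen_biUnion _ _ (_) _ _ fun p _ =>
          TopologicalSpace.isOpen_generateFrom_of_mem (Or.inl ⟨p, rfl⟩)
      · have : {r : DCheck P | ¬ s ≤ r} = ⋃ p ∈ s.1, {A : DCheck P | p ∉ A.1} := by
          ext r
          simp only [Set.mem_iUnion, Set.mem_setOf_eq]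
          constructor
          · intro hr
            obtain ⟨x, hx, hxs⟩ := Set.not_subset.1 hr
            exact ⟨x, hx, hxs⟩
          · rintro ⟨x, hxs, hx⟩ hle
            exact hx (hle hxs)
        rw [this]
        exact @isOpen_biUnion _ _ (_) _ _ fun p _ =>
          TopologicalSpace.isOpen_generateFrom_of_mem (Or.inr ⟨p, rfl⟩)
end

section
/- Let P be a partially ordered set. The map h : Ď(P) → M(2,γ,P) sending each downward set A to its characteristic function (h(A)(p) = 1 if p ∈ A, and 0 otherwise) is a homeomorphism from Ď(P) with its POTS topology onto the Mahavier product M(2,γ,P). -/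
/-- The relation `γ = {(0,0),(0,1),(1,1)}` on `2 = {0,1}`, i.e. `γ(0) = {0,1}` and
`γ(1) = {1}`. -/
def gammaRel : Set (Fin 2 × Fin 2) := {x | x.1 = 0 ∨ x.2 = 1}

open Classical

/-- The map sending a downward set `A ∈ Ď(P)` to its characteristic function
(`1` on `A`, `0` off `A`) is a homeomorphism of `Ď(P)` (with the POTS topology)
onto the Mahavier product `M(2,γ,P)`. -/
theorem dCheck_homeomorph_mahavier (P : Type*) [PartialOrder P] :
    ∃ h : DCheck P ≃ₜ mahavier gammaRel P,
      ∀ (A : DCheck P) (p : P),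
        ((h A : P → Fin 2) p) = if p ∈ A.val then 1 else 0 := by
  have hmem : ∀ (A : DCheck P), (fun p => if p ∈ A.val then (1 : Fin 2) else 0) ∈ mahavier gammaRel P := by
    intro A p q hpq
    show (if q ∈ A.val then (1 : Fin 2) else 0) = 0 ∨ (if p ∈ A.val then (1 : Fin 2) else 0) = 1
    by_cases hq : q ∈ A.val
    · right; rw [if_pos (A.property hpq hq)]
    · left; rw [if_neg hq]
  have hlow : ∀ x : mahavier gammaRel P, IsLowerSet {p | x.val p = 1} := by
    intro x q p hpq hq
    rcases x.property p q hpq with h | h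
    · have hq' : x.val q = 1 := hq
      have h' : x.val q = 0 := h
      rw [h'] at hq'
      exact absurd hq' (by decide)
    · exact h
  have hin : ∀ p : P, IsOpen {A : DCheck P | p ∈ A.val} := by
    intro p
    apply TopologicalSpace.isOpen_generateFrom_of_mem
    left
    refine ⟨⟨(Set.Ici p)ᶜ, (isUpperSet_Ici p).compl⟩, ?_⟩
    ext A
    constructor
    · intro hA hle
      exact hle hA (le_refl p)
    · intro hA
      by_contra hp
      exact hA (fun q hq hpq => hp (A.property hpq hq))
  have hout : ∀ p : P, IsOpen {A : DCheck P | p ∉ A.val} := by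
    intro p
    apply TopologicalSpace.isOpen_generateFrom_of_mem
    right
    refine ⟨⟨Set.Iic p, isLowerSet_Iic p⟩, ?_⟩
    ext A
    constructor
    · intro hA hle
      exact hA (hle (le_refl p))
    · intro hA hp
      exact hA (fun q hq => A.property hq hp)
  have hev : ∀ (p : P) (s : Set (Fin 2)), IsOpen {x : mahavier gammaRel P | x.val p ∈ s} := by
    intro p s
    exact (isOpen_discrete s).preimage ((continuous_apply p).comp continuous_subtype_val)
  refine ⟨{ toFun := fun A => ⟨_, hmem A⟩
            invFun := fun x => ⟨_, hlow x⟩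
            left_inv := ?_
            right_inv := ?_
            continuous_toFun := ?_
            continuous_invFun := ?_ }, fun A p => rfl⟩
  · intro A
    apply Subtype.ext
    ext p
    simp
  · intro x
    apply Subtype.ext
    funext p
    by_cases h : x.val p = 1
    · simp [h]
    · have h0 : x.val p = 0 := by omega
      simp [h0]
  · refine Continuous.subtype_mk (continuous_pi fun p => ?_) _
    have hcl : IsClopen {A : DCheck P | p ∈ A.val} := ⟨⟨hout p⟩, hin p⟩
    refine continuous_const.if ?_ continuous_const
    intro A hA
    rw [hcl.frontier_eq] at hA
    exact hA.elim
  · refine continuous_generateFrom_iff.2 ?_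
    rintro U (⟨S, rfl⟩ | ⟨S, rfl⟩)
    · have : IsOpen (⋃ p ∈ (S.val)ᶜ, {x : mahavier gammaRel P | x.val p ∈ ({1} : Set (Fin 2))}) :=
        isOpen_biUnion fun p _ => hev p _
      convert this using 1
      ext x
      simp only [Set.mem_iUnion]
      constructor
      · intro h
        obtain ⟨p, hp, hpS⟩ := Set.not_subset.1 h
        exact ⟨p, hpS, hp⟩
      · rintro ⟨p, hpS, hp⟩ h
        exact hpS (h hp)
    · have : IsOpen (⋃ p ∈ S.val, {x : mahavier gammaRel P | x.val p ∈ ({1}ᶜ : Set (Fin 2))}) :=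
        isOpen_biUnion fun p _ => hev p _
      convert this using 1
      ext x
      simp only [Set.mem_iUnion]
      constructor
      · intro h
        obtain ⟨p, hp, hpS⟩ := Set.not_subset.1 h
        exact ⟨p, hp, hpS⟩
      · rintro ⟨p, hpS, hp⟩ h
        exact hp (h hpS)
end

section
/- Let P be a partially ordered set and equip Ď(P), the set of downward subsets of P ordered by ⊆, with its POTS topology. Then Ď(P) is a continuous POTS: for all X, Y ∈ Ď(P) with X ⊄ Y there exist disjoint open sets U, V in Ď(P) with X ∈ U, Y ∈ V, U upward (A ∈ U and A ⊆ B imply B ∈ U) and V downward (A ∈ V and B ⊆ A imply B ∈ V). Concretely, for x ∈ X \ Y one may take U = {A ∈ Ď(P) : ¬(A ⊆ x^{¬≥})} and V = {A ∈ Ď(P) : ¬(x^≤ ⊆ A)}. -/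
/-- `Ď(P)` is a continuous POTS: for `X ⊄ Y` in `Ď(P)` there are disjoint open `U ∋ X`
(upward) and `V ∋ Y` (downward); concretely, for `x ∈ X \ Y` one may take
`U = {A : ¬(A ⊆ x^{¬≥})}` and `V = {A : ¬(x^≤ ⊆ A)}`. -/
theorem dCheck_continuous_pots (P : Type*) [PartialOrder P] :
    (∀ X Y : DCheck P, ¬ X.val ⊆ Y.val →
      ∃ U V : Set (DCheck P), IsOpen U ∧ IsOpen V ∧ X ∈ U ∧ Y ∈ V ∧ Disjoint U V ∧
        (∀ A B : DCheck P, A ∈ U → A.val ⊆ B.val → B ∈ U) ∧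
        (∀ A B : DCheck P, A ∈ V → B.val ⊆ A.val → B ∈ V)) ∧
    (∀ X Y : DCheck P, ¬ X.val ⊆ Y.val → ∀ x ∈ X.val \ Y.val,
      IsOpen {A : DCheck P | ¬ A.val ⊆ {r : P | ¬ x ≤ r}} ∧
      IsOpen {A : DCheck P | ¬ Set.Iic x ⊆ A.val} ∧
      X ∈ {A : DCheck P | ¬ A.val ⊆ {r : P | ¬ x ≤ r}} ∧
      Y ∈ {A : DCheck P | ¬ Set.Iic x ⊆ A.val} ∧
      Disjoint {A : DCheck P | ¬ A.val ⊆ {r : P | ¬ x ≤ r}}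
        {A : DCheck P | ¬ Set.Iic x ⊆ A.val} ∧
      (∀ A B : DCheck P, A ∈ {A : DCheck P | ¬ A.val ⊆ {r : P | ¬ x ≤ r}} →
        A.val ⊆ B.val → B ∈ {A : DCheck P | ¬ A.val ⊆ {r : P | ¬ x ≤ r}}) ∧
      (∀ A B : DCheck P, A ∈ {A : DCheck P | ¬ Set.Iic x ⊆ A.val} →
        B.val ⊆ A.val → B ∈ {A : DCheck P | ¬ Set.Iic x ⊆ A.val})) := by
  have key : ∀ X Y : DCheck P, ¬ X.val ⊆ Y.val → ∀ x ∈ X.val \ Y.val,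
      IsOpen {A : DCheck P | ¬ A.val ⊆ {r : P | ¬ x ≤ r}} ∧
      IsOpen {A : DCheck P | ¬ Set.Iic x ⊆ A.val} ∧
      X ∈ {A : DCheck P | ¬ A.val ⊆ {r : P | ¬ x ≤ r}} ∧
      Y ∈ {A : DCheck P | ¬ Set.Iic x ⊆ A.val} ∧
      Disjoint {A : DCheck P | ¬ A.val ⊆ {r : P | ¬ x ≤ r}}
        {A : DCheck P | ¬ Set.Iic x ⊆ A.val} ∧
      (∀ A B : DCheck P, A ∈ {A : DCheck P | ¬ A.val ⊆ {r : P | ¬ x ≤ r}} →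
        A.val ⊆ B.val → B ∈ {A : DCheck P | ¬ A.val ⊆ {r : P | ¬ x ≤ r}}) ∧
      (∀ A B : DCheck P, A ∈ {A : DCheck P | ¬ Set.Iic x ⊆ A.val} →
        B.val ⊆ A.val → B ∈ {A : DCheck P | ¬ Set.Iic x ⊆ A.val}) := by
    intro X Y _ x hx
    refine ⟨?_, ?_, ?_, ?_, ?_, ?_, ?_⟩
    · refine TopologicalSpace.isOpen_generateFrom_of_mem (Or.inl ?_)
      exact ⟨⟨{r : P | ¬ x ≤ r}, fun a b hba ha hxb => ha (le_trans hxb hba)⟩, rfl⟩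
    · refine TopologicalSpace.isOpen_generateFrom_of_mem (Or.inr ?_)
      exact ⟨⟨Set.Iic x, isLowerSet_Iic x⟩, rfl⟩
    · exact fun h => h hx.1 le_rfl
    · exact fun h => hx.2 (h (le_refl x))
    · rw [Set.disjoint_left]
      intro A hA hB
      apply hA
      intro r hr hxr
      exact hB fun q hq => A.property (le_trans hq hxr) hr
    · exact fun A B hA hAB hB => hA (hAB.trans hB)
    · exact fun A B hA hBA hB => hA (hB.trans hBA)
  refine ⟨?_, key⟩
  intro X Y h
  obtain ⟨x, hx, hy⟩ := Set.not_subset.mp h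
  exact ⟨_, _, key X Y h x ⟨hx, hy⟩⟩
end

section
/- Let Q be a preordered set and let Q* be its antisymmetrization: the partial order of equivalence classes of Q under the relation p ∼ q iff p ≼ q and q ≼ p. Then the Mahavier products M(2,γ,Q) and M(2,γ,Q*) are homeomorphic, via the map sending x ∈ M(2,γ,Q) to the function [p] ↦ x(p) (which is well-defined since x is constant on ∼-classes). -/
/-- For a preorder `Q` with antisymmetrization `Q* = Antisymmetrization Q (· ≤ ·)`,
the Mahavier products `M(2,γ,Q)` and `M(2,γ,Q*)` are homeomorphic, via the map
sending `x` to `[p] ↦ x p`. -/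
theorem mahavier_homeomorph_antisymmetrization (Q : Type*) [Preorder Q] :
    ∃ e : mahavier gammaRel Q ≃ₜ mahavier gammaRel (Antisymmetrization Q (· ≤ ·)),
      ∀ (x : mahavier gammaRel Q) (p : Q),
        (e x : Antisymmetrization Q (· ≤ ·) → Fin 2) (toAntisymmetrization (· ≤ ·) p) =
          (x : Q → Fin 2) p := by
  have key : ∀ (x : mahavier gammaRel Q) (p q : Q), p ≤ q → q ≤ p →
      (x : Q → Fin 2) p = (x : Q → Fin 2) q := by
    intro x p q hpq hqp
    have h1 : (x : Q → Fin 2) q = 0 ∨ (x : Q → Fin 2) p = 1 := x.2 p q hpq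
    have h2 : (x : Q → Fin 2) p = 0 ∨ (x : Q → Fin 2) q = 1 := x.2 q p hqp
    generalize (x : Q → Fin 2) p = a at *
    generalize (x : Q → Fin 2) q = b at *
    revert a b
    decide
  have hof : ∀ (x : mahavier gammaRel Q) (p : Q),
      (x : Q → Fin 2) (ofAntisymmetrization (· ≤ ·) (toAntisymmetrization (· ≤ ·) p)) =
        (x : Q → Fin 2) p := by
    intro x p
    have h : AntisymmRel (· ≤ ·)
        (ofAntisymmetrization (· ≤ ·) (toAntisymmetrization (· ≤ ·) p)) p :=
      Quotient.exact (toAntisymmetrization_ofAntisymmetrization (· ≤ ·)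
        (toAntisymmetrization (· ≤ ·) p))
    exact key x _ _ h.1 h.2
  refine ⟨{ toFun := fun x => ⟨fun a => x.1 (ofAntisymmetrization (· ≤ ·) a),
              fun a b hab => x.2 _ _ (ofAntisymmetrization_le_ofAntisymmetrization_iff.2 hab)⟩
            invFun := fun y => ⟨fun p => y.1 (toAntisymmetrization (· ≤ ·) p),
              fun p q hpq => y.2 _ _ (toAntisymmetrization_le_toAntisymmetrization_iff.2 hpq)⟩
            left_inv := fun x => Subtype.ext (funext fun p => hof x p)
            right_inv := fun y => Subtype.ext (funext fun a =>
              congrArg y.1 (toAntisymmetrization_ofAntisymmetrization (· ≤ ·) a))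
            continuous_toFun := ?_
            continuous_invFun := ?_ }, fun x p => hof x p⟩
  · refine Continuous.subtype_mk (continuous_pi fun a => ?_) _
    exact continuous_pi_iff.1 continuous_subtype_val _
  · refine Continuous.subtype_mk (continuous_pi fun p => ?_) _
    exact continuous_pi_iff.1 continuous_subtype_val _
end

section
/- Let P be a partially ordered set. The Mahavier product M(2,γ,P) is a closed subset of the Tychonoff product 2^P; consequently M(2,γ,P) is compact. -/
/-- `M(2,γ,P)` is a closed subset of the Tychonoff product `2^P`, hence compact. -/
theorem mahavier_gamma_isClosed_isCompact (P : Type*) [PartialOrder P] :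
    IsClosed (mahavier gammaRel P) ∧ IsCompact (mahavier gammaRel P) := by
  have h : IsClosed (mahavier gammaRel P) := by
    have e : mahavier gammaRel P =
        ⋂ (p : P) (q : P) (_ : p ≤ q), (fun x : P → Fin 2 => (x q, x p)) ⁻¹' gammaRel := by
      ext x
      simp [mahavier]
    rw [e]
    refine isClosed_iInter fun p => isClosed_iInter fun q => isClosed_iInter fun _ => ?_
    exact (isClosed_discrete gammaRel).preimage (by fun_prop)
  exact ⟨h, h.isCompact⟩
end

section
/- The set of finite subsets of ℕ, partially ordered by inclusion ⊆ and equipped with its POTS topology, is not a Hausdorff space. -/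
/-- The set of finite subsets of `ℕ`, ordered by inclusion and given the POTS
topology, is not Hausdorff. -/
theorem finsetNat_pots_not_t2 :
    letI : TopologicalSpace (Finset ℕ) := potsTopology (Finset ℕ)
    ¬ T2Space (Finset ℕ) := by
  intro h
  letI : TopologicalSpace (Finset ℕ) := potsTopology (Finset ℕ)
  have key : ∀ x : Finset ℕ,
      Filter.Tendsto (fun n : ℕ => ({n} : Finset ℕ)) Filter.atTop (nhds x) := by
    intro x
    refine TopologicalSpace.tendsto_nhds_generateFrom_iff.2 ?_
    rintro U (⟨s, rfl⟩ | ⟨s, rfl⟩) hx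
    · refine Filter.mem_atTop_sets.2 ⟨s.sup id + 1, fun n hn hns => ?_⟩
      have hmem : n ∈ s := Finset.singleton_subset_iff.1 hns
      have hle : n ≤ s.sup id := Finset.le_sup (f := id) hmem
      omega
    · have hs : s.Nonempty := by
        by_contra hne
        rw [Finset.not_nonempty_iff_eq_empty] at hne
        subst hne
        exact hx (Finset.empty_subset x)
      obtain ⟨a, ha⟩ := hs
      refine Filter.mem_atTop_sets.2 ⟨a + 1, fun n hn hns => ?_⟩
      have han : a = n := Finset.mem_singleton.1 (hns ha)
      omega
  have heq : (∅ : Finset ℕ) = {0} := tendsto_nhds_unique (key ∅) (key {0})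
  exact Finset.singleton_ne_empty 0 heq.symm
end

section
/- Let P be a partially ordered set. The map sending each downward set A ∈ Ď(P) to its characteristic function (the function x : P → {0,1} with x(p) = 1 iff p ∈ A) is a bijection from Ď(P) onto the Mahavier product M(2,γ,P) (as sets). -/
open Classical

/-- The characteristic-function map is a bijection from `Ď(P)` onto `M(2,γ,P)`:
it is injective and its range is exactly the Mahavier product `M(2,γ,P)`. -/
theorem dCheck_bijection_mahavier (P : Type*) [PartialOrder P] :
    Function.Injective
      (fun A : DCheck P => (fun p : P => if p ∈ A.val then (1 : Fin 2) else 0)) ∧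
    Set.range
      (fun A : DCheck P => (fun p : P => if p ∈ A.val then (1 : Fin 2) else 0)) =
      mahavier gammaRel P := by
  constructor
  · intro A B h
    apply Subtype.ext
    ext p
    have hp := congrFun h p
    by_cases h1 : p ∈ A.val <;> by_cases h2 : p ∈ B.val <;> simp_all
  · ext x
    constructor
    · rintro ⟨A, rfl⟩ p q hpq
      by_cases hq : q ∈ A.val
      · right
        exact if_pos (A.property hpq hq)
      · left
        exact if_neg hq
    · intro hx
      refine ⟨⟨{p | x p = 1}, ?_⟩, ?_⟩
      · intro q p hpq hq
        have hq' : x q = 1 := hq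
        rcases hx p q hpq with h | h
        · have h' : x q = 0 := h
          rw [hq'] at h'
          exact absurd h' (by decide)
        · exact h
      · funext p
        by_cases hp : x p = 1
        · exact (if_pos hp).trans hp.symm
        · refine (if_neg hp).trans ?_
          omega
end
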